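/- Let d ≥ 3 be an integer and p a prime with gcd(p,d) = 1. There exist constants δ > 0 and c > 0 such that: for every 𝔫 = (𝔫_0,…,𝔫_{p−1}) ∈ [0,∞)^p with Σ_j 𝔫_j = 1 and Σ_{j=0}^{p−1} |𝔫_j − 1/p| ≤ δ, and every α : T_{d,p} → [0,∞) with Σ_{a ∈ T_{d,p}} α_a Φ(a) = d·(𝔫_0,…,𝔫_{p−1}), one has −Σ_{a} α_a ln α_a + (d−1) Σ_{j} 𝔫_j ln 𝔫_j ≤ −c · Σ_{j=0}^{p−1} (𝔫_j − 1/p)² (with the convention 0·ln 0 = 0). -/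

import Mathlib

/-!
The entropy of `α` is bounded by Gibbs' inequality against the product weights
`a ↦ ∏ i, m (a i)`: since the marginals of `α` average to `m`, the left-hand side is at most
`(p * Z - 1) - log p - ∑ j, m j * log (m j)`, where `Z` is the total mass on `Tset d p` of the
product weights (`gibbs_bound`). Write `ε j = m j - 1 / p` and `L = ∑ j, |ε j|`.

* `Z` is the value at `0` of the `d`-fold convolution power of `m = 1 / p + ε`. As `ε` has total
  mass zero, its convolution with a constant vanishes, so `Z = 1 / p + ε^{*d}(0)` and
  `Z ≤ 1 / p + L ^ d ≤ 1 / p + L ^ 3` when `L ≤ 1` (`conv_bound`). This is where `3 ≤ d` enters.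
* `log p + ∑ j, m j * log (m j)` is the relative entropy of `m` with respect to the uniform
  distribution, and is at least `(p / 9) * ∑ j, ε j ^ 2` (`entropy_bound`).

By Cauchy–Schwarz `L ^ 2 ≤ p * ∑ j, ε j ^ 2`, so for `L ≤ 1 / (18 p)` the cubic term `p * L ^ 3`
is at most half of the quadratic one.
-/

/-- `phi a j` is the number of coordinates of the tuple `a` equal to `j`
(the `j`-th coordinate of the counting vector `Φ(a)`). -/
noncomputable def phi {p k : ℕ} (a : Fin k → ZMod p) (j : ZMod p) : ℕ :=
  Nat.card {i : Fin k // a i = j}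

/-- The adjacency matrix of the `d`-regular directed multigraph on `n` vertices
associated to a permutation `P` of the `n·d` points of the configuration model:
`A(P)_{kℓ} = #{k' ∈ F_k : P(k') ∈ F_ℓ}`. -/
noncomputable def adjMat (n d : ℕ) (P : Equiv.Perm (Fin n × Fin d)) :
    Matrix (Fin n) (Fin n) ℤ :=
  Matrix.of fun k l => (Nat.card {k' : Fin d // (P (k, k')).1 = l} : ℤ)

/-- `T_{d,p}`, the set of `d`-tuples over `F_p` summing to zero. -/
def Tset (d p : ℕ) [NeZero p] : Finset (Fin d → ZMod p) :=
  Finset.univ.filter (fun a => ∑ i, a i = 0)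

/-- Summing a function over the entries of a tuple, grouped by the value of the entry. -/
theorem sum_phi {p k : ℕ} [NeZero p] (a : Fin k → ZMod p) (f : ZMod p → ℝ) :
    ∑ i, f (a i) = ∑ j, (phi a j : ℝ) * f j := by
  classical
  rw [← Finset.sum_fiberwise Finset.univ a (fun i => f (a i))]
  refine Finset.sum_congr rfl fun j _ => ?_
  rw [Finset.sum_congr rfl (g := fun _ => f j)
    (fun i hi => by rw [(Finset.mem_filter.mp hi).2])]
  rw [Finset.sum_const, nsmul_eq_mul, phi, Nat.card_eq_fintype_card, Fintype.card_subtype]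

/-- The `k`-fold convolution power of `m` on `ZMod p`, evaluated at `s`: the total product weight
of the `k`-tuples summing to `s`. -/
noncomputable def convPow {p : ℕ} [NeZero p] (m : ZMod p → ℝ) (k : ℕ) (s : ZMod p) : ℝ :=
  ∑ a : Fin k → ZMod p, if ∑ i, a i = s then ∏ i, m (a i) else 0

theorem convPow_succ {p : ℕ} [NeZero p] (m : ZMod p → ℝ) (k : ℕ) (s : ZMod p) :
    convPow m (k + 1) s = ∑ x, m x * convPow m k (s - x) := by
  unfold convPow
  rw [← (Fin.consEquiv (fun _ : Fin (k + 1) => ZMod p)).sum_comp, Fintype.sum_prod_type]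
  refine Finset.sum_congr rfl fun x _ => ?_
  rw [Finset.mul_sum]
  refine Finset.sum_congr rfl fun a _ => ?_
  simp only [Fin.consEquiv_apply, Fin.sum_univ_succ, Fin.prod_univ_succ, Fin.cons_zero,
    Fin.cons_succ, eq_sub_iff_add_eq', mul_ite, mul_zero]

theorem sum_convPow {p : ℕ} [NeZero p] (m : ZMod p → ℝ) (hm : ∑ j, m j = 1) (k : ℕ) :
    ∑ s, convPow m k s = 1 := by
  induction k with
  | zero => simp [convPow]
  | succ k ih =>
    simp only [convPow_succ]
    rw [Finset.sum_comm]
    simp only [← Finset.mul_sum]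
    have h : ∀ x : ZMod p, ∑ s, convPow m k (s - x) = 1 := fun x => by
      rw [← ih]
      exact (Equiv.subRight x).sum_comp (convPow m k)
    simp [h, hm]

/-- Convolution powers of a probability vector close to uniform approach the uniform vector
geometrically: for `1 ≤ k`, the deviation from `1 / p` of the `k`-th power is the `k`-th
convolution power of the deviation of `m`. -/
theorem conv_bound {p : ℕ} [NeZero p] (m : ZMod p → ℝ) (hm : ∑ j, m j = 1) (k : ℕ)
    (s : ZMod p) :
    |convPow m k s - 1 / p| ≤ (∑ j : ZMod p, |m j - 1 / p|) ^ k := by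
  have hp1 : (1 : ℝ) ≤ p := by exact_mod_cast NeZero.one_le
  have hp : (p : ℝ) ≠ 0 := by positivity
  induction k generalizing s with
  | zero =>
    have h0 : 0 ≤ 1 / (p : ℝ) := by positivity
    have h1 : 1 / (p : ℝ) ≤ 1 := (div_le_one (by positivity)).mpr hp1
    rw [pow_zero, abs_le]
    simp only [convPow, Finset.univ_unique, Finset.sum_singleton, Finset.univ_eq_empty,
      Finset.sum_empty, Finset.prod_empty]
    split_ifs <;> constructor <;> linarith
  | succ k ih =>
    have hS : ∑ x : ZMod p, convPow m k (s - x) = 1 := by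
      rw [← sum_convPow m hm k]
      exact (Equiv.subLeft s).sum_comp (convPow m k)
    have key : convPow m (k + 1) s - 1 / p
        = ∑ x, (m x - 1 / p) * (convPow m k (s - x) - 1 / p) := by
      simp only [sub_mul, mul_sub, Finset.sum_sub_distrib, ← Finset.mul_sum, ← Finset.sum_mul,
        hS, hm, convPow_succ, Finset.sum_const, Finset.card_univ, ZMod.card, nsmul_eq_mul]
      field_simp
      ring
    rw [key, pow_succ', Finset.sum_mul]
    refine (Finset.abs_sum_le_sum_abs _ _).trans (Finset.sum_le_sum fun x _ => ?_)
    rw [abs_mul]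
    exact mul_le_mul_of_nonneg_left (ih _) (abs_nonneg _)

theorem sum_Tset_eq {p : ℕ} [NeZero p] (d : ℕ) (m : ZMod p → ℝ) :
    ∑ a ∈ Tset d p, ∏ i, m (a i) = convPow m d 0 := by
  rw [Tset, Finset.sum_filter, convPow]

/-- Quadratic lower bound for `y log y` above its tangent at `1`, through
`y * log y - y + 1 ≥ (√y - 1) ^ 2`. -/
theorem mul_log_lower {y : ℝ} (hy : 0 < y) (hy4 : y ≤ 4) :
    (y - 1) + (y - 1) ^ 2 / 9 ≤ y * Real.log y := by
  obtain ⟨t, ht, rfl⟩ : ∃ t : ℝ, 0 < t ∧ y = t ^ 2 :=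
    ⟨√y, Real.sqrt_pos.mpr hy, (Real.sq_sqrt hy.le).symm⟩
  have ht2 : t ≤ 2 := by nlinarith
  have hl := Real.one_sub_inv_le_log_of_pos ht
  have h1 : t ^ 2 * (1 - t⁻¹) ≤ t ^ 2 * Real.log t := by gcongr
  have h2 : t ^ 2 * (1 - t⁻¹) = t ^ 2 - t := by field_simp
  rw [Real.log_pow]
  push_cast
  have h3 : (t ^ 2 - 1) ^ 2 ≤ 9 * (t - 1) ^ 2 := by
    have : (t + 1) ^ 2 ≤ 9 := by nlinarith
    nlinarith [mul_le_mul_of_nonneg_left this (sq_nonneg (t - 1))]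
  nlinarith

/-- Lower bound for the relative entropy with respect to the uniform distribution. -/
theorem entropy_bound {p : ℕ} [NeZero p] (m : ZMod p → ℝ) (hpos : ∀ j, 0 < m j)
    (hle : ∀ j, p * m j ≤ 4) (hm : ∑ j, m j = 1) :
    (p : ℝ) / 9 * ∑ j : ZMod p, (m j - 1 / p) ^ 2
      ≤ Real.log p + ∑ j, m j * Real.log (m j) := by
  have hp : (0 : ℝ) < p := by exact_mod_cast NeZero.pos p
  have h : ∀ j, (m j - 1 / p) + (p : ℝ) / 9 * (m j - 1 / p) ^ 2
      ≤ m j * Real.log p + m j * Real.log (m j) := fun j => by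
    have h1 := mul_log_lower (mul_pos hp (hpos j)) (hle j)
    rw [Real.log_mul hp.ne' (hpos j).ne'] at h1
    refine le_of_mul_le_mul_left ?_ hp
    calc _ = (p * m j - 1) + (p * m j - 1) ^ 2 / 9 := by field_simp
      _ ≤ _ := h1
      _ = _ := by ring
  have hs := Finset.sum_le_sum fun j (_ : j ∈ Finset.univ) => h j
  simp only [Finset.sum_add_distrib, ← Finset.mul_sum, ← Finset.sum_mul,
    Finset.sum_sub_distrib, hm] at hs
  simpa [ZMod.card, hp.ne'] using hs

/-- Gibbs' inequality against the weights `a ↦ p * ∏ i, m (a i)`, whose total mass on `Tset d p`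
need not equal `1`. -/
theorem gibbs_bound {p : ℕ} [NeZero p] (d : ℕ) (hd : d ≠ 0) (m : ZMod p → ℝ)
    (hpos : ∀ j, 0 < m j) (hm : ∑ j, m j = 1) (α : (Fin d → ZMod p) → ℝ)
    (hα : ∀ a ∈ Tset d p, 0 ≤ α a)
    (hmarg : ∀ j : ZMod p, ∑ a ∈ Tset d p, α a * (phi a j : ℝ) = d * m j) :
    -∑ a ∈ Tset d p, α a * Real.log (α a) + d * ∑ j, m j * Real.log (m j) + Real.log p
      ≤ p * convPow m d 0 - 1 := by
  have hp : (0 : ℝ) < p := by exact_mod_cast NeZero.pos p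
  have hdual : ∀ f : ZMod p → ℝ,
      ∑ a ∈ Tset d p, α a * ∑ i, f (a i) = d * ∑ j, m j * f j := fun f => by
    simp only [sum_phi, Finset.mul_sum]
    rw [Finset.sum_comm]
    refine Finset.sum_congr rfl fun j _ => ?_
    rw [← mul_assoc, ← hmarg j, Finset.sum_mul]
    simp only [mul_assoc]
  have hone : ∑ a ∈ Tset d p, α a = 1 := by
    have h := hdual fun _ => 1
    simp only [Finset.sum_const, Finset.card_univ, Fintype.card_fin, nsmul_eq_mul, mul_one, hm,
      ← Finset.sum_mul] at h
    exact mul_right_cancel₀ (b := (d : ℝ)) (by exact_mod_cast hd) (by rw [h, one_mul])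
  have hterm : ∀ a ∈ Tset d p,
      -(α a * Real.log (α a)) + α a * ∑ i, Real.log (m (a i)) + α a * Real.log p
        ≤ p * ∏ i, m (a i) - α a := fun a ha => by
    have hP : 0 < ∏ i, m (a i) := Finset.prod_pos fun i _ => hpos _
    rcases (hα a ha).eq_or_lt with h0 | h0
    · rw [← h0]
      simp only [zero_mul, neg_zero, add_zero, sub_zero]
      positivity
    · have hl := Real.log_le_sub_one_of_pos (div_pos (mul_pos hp hP) h0)
      rw [Real.log_div (by positivity) h0.ne', Real.log_mul hp.ne' hP.ne',
        Real.log_prod (fun i _ => (hpos _).ne')] at hl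
      have h2 := mul_le_mul_of_nonneg_left hl h0.le
      have h3 : α a * (p * (∏ i, m (a i)) / α a - 1) = p * ∏ i, m (a i) - α a := by
        field_simp
      rw [h3] at h2
      linarith
  have hs := Finset.sum_le_sum hterm
  simp only [Finset.sum_add_distrib, Finset.sum_sub_distrib, Finset.sum_neg_distrib,
    ← Finset.mul_sum, ← Finset.sum_mul, hone, sum_Tset_eq] at hs
  rw [hdual (fun j => Real.log (m j))] at hs
  linarith

/-- **quantitative negativity of the rate function near the uniform point.**
Let `d ≥ 3`, `p` prime with `gcd(p,d)=1`. There are `δ > 0` and `c > 0` such that for every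
`𝔫 ∈ [0,∞)^p` with `∑_j 𝔫_j = 1` and `∑_j |𝔫_j - 1/p| ≤ δ`, and every `α : T_{d,p} → [0,∞)`
with `∑_a α_a Φ(a) = d·𝔫`, one has
`-∑_a α_a ln α_a + (d-1) ∑_j 𝔫_j ln 𝔫_j ≤ -c ∑_j (𝔫_j - 1/p)²`. -/
theorem stmt18 (d p : ℕ) (hd : 3 ≤ d) [Fact p.Prime] (hgcd : Nat.gcd p d = 1) :
    ∃ δ : ℝ, 0 < δ ∧ ∃ c : ℝ, 0 < c ∧
      ∀ m : ZMod p → ℝ, (∀ j, 0 ≤ m j) → (∑ j, m j = 1) →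
        (∑ j : ZMod p, |m j - 1 / p| ≤ δ) →
        ∀ α : (Fin d → ZMod p) → ℝ, (∀ a ∈ Tset d p, 0 ≤ α a) →
          (∀ j : ZMod p, ∑ a ∈ Tset d p, α a * (phi a j : ℝ) = d * m j) →
          -∑ a ∈ Tset d p, α a * Real.log (α a)
              + ((d : ℝ) - 1) * ∑ j : ZMod p, m j * Real.log (m j)
            ≤ -c * ∑ j : ZMod p, (m j - 1 / p) ^ 2 := by
  have hp : (0 : ℝ) < p := by exact_mod_cast NeZero.pos p
  have hp1 : (1 : ℝ) ≤ p := by exact_mod_cast (NeZero.one_le : 1 ≤ p)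
  refine ⟨1 / (18 * p), by positivity, p / 18, by positivity, ?_⟩
  intro m _ hm hδ α hα hmarg
  set L := ∑ j : ZMod p, |m j - 1 / p| with hL
  set Q := ∑ j : ZMod p, (m j - 1 / p) ^ 2 with hQ
  have hL0 : 0 ≤ L := Finset.sum_nonneg fun j _ => abs_nonneg _
  have hpL : p * L ≤ 1 / 18 :=
    calc p * L ≤ p * (1 / (18 * p)) := by gcongr
      _ = 1 / 18 := by field_simp
  have hL1 : L ≤ 1 := by nlinarith
  have hdev : ∀ j, |p * m j - 1| ≤ 1 / 18 := fun j => by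
    have h1 : |m j - 1 / p| ≤ L :=
      Finset.single_le_sum (f := fun j => |m j - 1 / p|) (fun j _ => abs_nonneg _)
        (Finset.mem_univ j)
    calc |p * m j - 1| = |p * (m j - 1 / p)| := by congr 1; field_simp
      _ = p * |m j - 1 / p| := by rw [abs_mul, abs_of_pos hp]
      _ ≤ p * L := by gcongr
      _ ≤ 1 / 18 := hpL
  have hpos : ∀ j, 0 < m j := fun j => by
    have := (abs_le.mp (hdev j)).1
    exact pos_of_mul_pos_right (show 0 < (p : ℝ) * m j by linarith) hp.le
  have hle : ∀ j, p * m j ≤ 4 := fun j => by linarith [(abs_le.mp (hdev j)).2]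
  have hE := entropy_bound m hpos hle hm
  have hG := gibbs_bound d (by omega) m hpos hm α hα hmarg
  have hC : convPow m d 0 - 1 / p ≤ L ^ 3 :=
    (le_abs_self _).trans ((conv_bound m hm d 0).trans (pow_le_pow_of_le_one hL0 hL1 hd))
  have hCS : L ^ 2 ≤ p * Q := by
    have h := sq_sum_le_card_mul_sum_sq (s := (Finset.univ : Finset (ZMod p)))
      (f := fun j => |m j - 1 / p|)
    simpa [ZMod.card, hL, hQ] using h
  have hZ : p * convPow m d 0 - 1 ≤ p / 18 * Q :=
    calc p * convPow m d 0 - 1 = p * (convPow m d 0 - 1 / p) := by field_simp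
      _ ≤ p * L ^ 3 := by gcongr
      _ = (p * L) * L ^ 2 := by ring
      _ ≤ (1 / 18) * (p * Q) := by gcongr
      _ = p / 18 * Q := by ring
  rw [← hQ] at hE
  linarith
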